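/- If x ∈ X is a Lebesgue point of f, then the series Σᵢ λᵢ uᵢ(x)² converges absolutely and Σᵢ λᵢ uᵢ(x)² = k_T(x,x). -/

import Mathlib

/-!
Write `B` for the ball `B_r(x)` and `S_N = Σ_{i<N} |λᵢ| uᵢ²`. Since `k_T` is continuous, its mean
over `B × B` tends to `k_T(x,x)` as `r → 0`. The expansion `k_T = Σ λᵢ uᵢ ⊗ uᵢ` holds in
`L²(μ ⊗ μ)`, so it may be integrated over `B × B`: the mean of `k_T` there is
`Σ λᵢ (avg_B uᵢ)²`. By Cauchy–Schwarz `(avg_B uᵢ)² ≤ avg_B (uᵢ²)`, hence the tail `i ≥ N` of this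
series is at most `avg_B f - avg_B S_N` (`box_estimate`), using `S_n ≤ f` almost everywhere
(`ae_summable_of_trace`, the only place where the trace-class hypothesis enters).

Eigenfunctions with `λᵢ ≠ 0` are continuous (`continuous_integral_mdsKT_mul`), so letting `r → 0` at
a Lebesgue point gives `|k_T(x,x) - Σ_{i<N} λᵢ uᵢ(x)²| ≤ f(x) - S_N(x)` for every `N`. In
particular `S_N(x) ≤ f(x)`, which yields absolute convergence at `x`, even though the real-valued
`tsum` defining `f(x)` would be `0` for a divergent series; then `N → ∞` gives the identity.

The fourth moment enters through the weight `1 + d(z,y)²`, which is in `L²(μ)`: up to an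
additive constant, `k` and `k_T` are bounded by the product of the weights at `x` and `y`.
-/

open MeasureTheory Metric Filter Topology

noncomputable section

/-- The MDS kernel `k(x,y) = -(1/2) d(x,y)²`. -/
def mdsK {X : Type*} [MetricSpace X] (x y : X) : ℝ := -(1/2) * dist x y ^ 2

/-- The centered MDS kernel. -/
def mdsKT {X : Type*} [MetricSpace X] [MeasurableSpace X] (μ : Measure X) (x y : X) : ℝ :=
  mdsK x y - (∫ y', mdsK x y' ∂μ) - (∫ x', mdsK x' y ∂μ) + ∫ x', ∫ y', mdsK x' y' ∂μ ∂μ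

/-- `x` is a Lebesgue point of `f`: all balls around `x` have positive measure and the averages
of `f` over `B_r(x)` converge to `f(x)` as `r → 0⁺`. -/
def IsLebPoint {X : Type*} [MetricSpace X] [MeasurableSpace X]
    (μ : Measure X) (f : X → ℝ) (x : X) : Prop :=
  (∀ r > 0, 0 < μ (ball x r)) ∧
  Tendsto (fun r : ℝ => (μ (ball x r)).toReal⁻¹ * ∫ y in ball x r, f y ∂μ)
    (𝓝[>] 0) (𝓝 (f x))

/-! ### Averages over sets and shrinking balls -/

/-- Cauchy–Schwarz against the constant `1` on a set of finite measure. -/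
lemma sq_setIntegral_le {Y : Type*} [MeasurableSpace Y] (ν : Measure Y) [IsFiniteMeasure ν]
    {g : Y → ℝ} (hg : MemLp g 2 ν) (S : Set Y) :
    (∫ y in S, g y ∂ν) ^ 2 ≤ ν.real S * ∫ y in S, g y ^ 2 ∂ν := by
  have h1 : Integrable g (ν.restrict S) := (hg.integrable one_le_two).restrict
  have h2 : Integrable (fun y => g y ^ 2) (ν.restrict S) := hg.integrable_sq.restrict
  rcases (measureReal_nonneg : 0 ≤ ν.real S).eq_or_lt with h0 | h0
  · have hS : ν S = 0 := by
      rwa [eq_comm, measureReal_eq_zero_iff] at h0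
    simp [Measure.restrict_eq_zero.2 hS]
  · set s := ∫ y in S, g y ∂ν
    set m := ν.real S with hm
    -- The variance-type quantity `∫ (m g - s)²` over `S` equals `m (m ∫ g² - s²)`.
    have h3 : 0 ≤ ∫ y in S, (m * g y - s) ^ 2 ∂ν := integral_nonneg fun _ => sq_nonneg _
    have h4 : ∫ y in S, (m * g y - s) ^ 2 ∂ν
        = m ^ 2 * (∫ y in S, g y ^ 2 ∂ν) - 2 * m * s * s + s ^ 2 * m := by
      have : ∀ y, (m * g y - s) ^ 2 = m ^ 2 * g y ^ 2 - 2 * m * s * g y + s ^ 2 := fun y => by ring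
      have h2' : Integrable (fun y => m ^ 2 * g y ^ 2) (ν.restrict S) := h2.const_mul _
      have h1' : Integrable (fun y => 2 * m * s * g y) (ν.restrict S) := h1.const_mul _
      have h21 : Integrable (fun y => m ^ 2 * g y ^ 2 - 2 * m * s * g y) (ν.restrict S) :=
        h2'.sub h1'
      simp only [this]
      rw [integral_add h21 (integrable_const _), integral_sub h2' h1', integral_const_mul,
        integral_const_mul]
      simp [hm, s, mul_comm]
    have h5 : 0 ≤ m * (m * (∫ y in S, g y ^ 2 ∂ν) - s ^ 2) := by
      rw [h4] at h3; nlinarith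
    have := nonneg_of_mul_nonneg_right h5 h0
    linarith

/-- Averages over shrinking balls converge at every point of continuity. -/
lemma tendsto_ball_average {Y : Type*} [PseudoMetricSpace Y] [MeasurableSpace Y]
    (ν : Measure Y) [IsFiniteMeasure ν] {g : Y → ℝ} (hg : Integrable g ν)
    {a : Y} (hc : ContinuousAt g a) (hpos : ∀ r > 0, 0 < ν (ball a r)) :
    Tendsto (fun r : ℝ => (ν.real (ball a r))⁻¹ * ∫ y in ball a r, g y ∂ν)
      (𝓝[>] 0) (𝓝 (g a)) := by
  rw [Metric.tendsto_nhds]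
  intro ε hε
  obtain ⟨δ, hδ, h⟩ := Metric.continuousAt_iff.1 hc (ε / 2) (half_pos hε)
  filter_upwards [Ioo_mem_nhdsGT hδ] with r hr
  have hm : 0 < ν.real (ball a r) :=
    ENNReal.toReal_pos (hpos r hr.1).ne' (measure_ne_top _ _)
  have h1 : ‖∫ y in ball a r, (g y - g a) ∂ν‖ ≤ ε / 2 * ν.real (ball a r) := by
    refine norm_setIntegral_le_of_norm_le_const (measure_lt_top _ _) fun y hy => ?_
    exact (h ((mem_ball.1 hy).trans hr.2)).le
  rw [integral_sub hg.restrict (integrable_const _)] at h1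
  simp only [integral_const, measureReal_restrict_apply_univ, smul_eq_mul] at h1
  rw [Real.dist_eq]
  have h2 : (ν.real (ball a r))⁻¹ * (∫ y in ball a r, g y ∂ν) - g a =
      (ν.real (ball a r))⁻¹ * ((∫ y in ball a r, g y ∂ν) - ν.real (ball a r) * g a) := by
    field_simp
  rw [h2, abs_mul, abs_of_pos (inv_pos.2 hm)]
  calc _ ≤ (ν.real (ball a r))⁻¹ * (ε / 2 * ν.real (ball a r)) := by
        gcongr; exact h1
    _ = ε / 2 := by field_simp
    _ < ε := half_lt_self hε

/-! ### The spectral expansion integrated over a box -/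

/-- The tail of the spectral expansion, integrated over a box `B × B`, is controlled by the tail
of `f` integrated over `B`: after Cauchy–Schwarz the `i`-th term is at most
`μ(B) ∫_B |λᵢ| uᵢ²`. -/
lemma box_estimate {X : Type*} [MeasurableSpace X] (μ : Measure X) [IsProbabilityMeasure μ]
    (K : X × X → ℝ) (hK : MemLp K 2 (μ.prod μ)) (lam : ℕ → ℝ) (u : ℕ → X → ℝ)
    (hu : ∀ i, MemLp (u i) 2 μ)
    (hlim : Tendsto (fun n => ∫ p, (K p - ∑ i ∈ Finset.range n, lam i * u i p.1 * u i p.2) ^ 2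
        ∂(μ.prod μ)) atTop (𝓝 0))
    (f : X → ℝ) (hf : Integrable f μ)
    (hle : ∀ N, ∀ᵐ y ∂μ, ∑ i ∈ Finset.range N, |lam i| * u i y ^ 2 ≤ f y)
    (B : Set X) (N : ℕ) :
    |(∫ p in B ×ˢ B, K p ∂(μ.prod μ)) - ∑ i ∈ Finset.range N, lam i * (∫ y in B, u i y ∂μ) ^ 2|
      ≤ μ.real B * ((∫ y in B, f y ∂μ)
          - ∫ y in B, (∑ i ∈ Finset.range N, |lam i| * u i y ^ 2) ∂μ) := by
  have hu2 : ∀ i, Integrable (fun y => u i y ^ 2) μ := fun i => (hu i).integrable_sq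
  have hu1 : ∀ i, Integrable (u i) μ := fun i => (hu i).integrable one_le_two
  have hprod : ∀ i, MemLp (fun p : X × X => lam i * u i p.1 * u i p.2) 2 (μ.prod μ) := by
    intro i
    refine (memLp_two_iff_integrable_sq ?_).2 ?_
    · exact ((hu i).1.comp_fst.const_mul _).mul (hu i).1.comp_snd
    · have := ((hu2 i).mul_prod (hu2 i)).const_mul (lam i ^ 2)
      refine this.congr (Eventually.of_forall fun p => ?_)
      simp only; ring
  have hG : ∀ n, MemLp (fun p : X × X => K p - ∑ i ∈ Finset.range n, lam i * u i p.1 * u i p.2) 2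
      (μ.prod μ) := fun n => hK.sub (memLp_finsetSum _ fun i _ => hprod i)
  -- `L²` convergence on a probability space gives convergence of integrals over `B × B`.
  have hconv : Tendsto (fun n => ∑ i ∈ Finset.range n, lam i * (∫ y in B, u i y ∂μ) ^ 2) atTop
      (𝓝 (∫ p in B ×ˢ B, K p ∂(μ.prod μ))) := by
    have hbox : ∀ n, ∫ p in B ×ˢ B, (K p - ∑ i ∈ Finset.range n, lam i * u i p.1 * u i p.2)
        ∂(μ.prod μ) = (∫ p in B ×ˢ B, K p ∂(μ.prod μ))
          - ∑ i ∈ Finset.range n, lam i * (∫ y in B, u i y ∂μ) ^ 2 := by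
      intro n
      rw [integral_sub (hK.integrable one_le_two).restrict
        (integrable_finsetSum _ fun i _ => ((hprod i).integrable one_le_two).restrict),
        integral_finsetSum _ fun i _ => ((hprod i).integrable one_le_two).restrict]
      congr 1
      refine Finset.sum_congr rfl fun i _ => ?_
      rw [setIntegral_prod_mul (fun y => lam i * u i y) (u i), integral_const_mul]
      ring
    have hsq : Tendsto (fun n => ((∫ p in B ×ˢ B, K p ∂(μ.prod μ))
          - ∑ i ∈ Finset.range n, lam i * (∫ y in B, u i y ∂μ) ^ 2) ^ 2) atTop (𝓝 0) := by
      refine squeeze_zero (fun _ => sq_nonneg _) (fun n => ?_) hlim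
      rw [← hbox]
      refine (sq_setIntegral_le _ (hG n) _).trans ?_
      refine (mul_le_of_le_one_left (integral_nonneg fun _ => sq_nonneg _)
        measureReal_le_one).trans ?_
      exact setIntegral_le_integral (hG n).integrable_sq (Eventually.of_forall fun _ => sq_nonneg _)
    have h0 : Tendsto (fun n => (∫ p in B ×ˢ B, K p ∂(μ.prod μ))
          - ∑ i ∈ Finset.range n, lam i * (∫ y in B, u i y ∂μ) ^ 2) atTop (𝓝 0) := by
      rw [tendsto_zero_iff_abs_tendsto_zero]
      simpa [Function.comp_def, Real.sqrt_sq_eq_abs] using hsq.sqrt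
    simpa using h0.const_sub (∫ p in B ×ˢ B, K p ∂(μ.prod μ))
  refine le_of_tendsto ((hconv.sub_const _).abs) ?_
  filter_upwards [eventually_ge_atTop N] with n hn
  have hS : ∀ n, ∫ y in B, (∑ i ∈ Finset.range n, |lam i| * u i y ^ 2) ∂μ
      = ∑ i ∈ Finset.range n, |lam i| * ∫ y in B, u i y ^ 2 ∂μ := by
    intro n
    rw [integral_finsetSum _ fun i _ => ((hu2 i).restrict.const_mul _)]
    simp only [integral_const_mul]
  have h1 : ∑ i ∈ Finset.range n, |lam i| * ∫ y in B, u i y ^ 2 ∂μ ≤ ∫ y in B, f y ∂μ := by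
    rw [← hS]
    exact setIntegral_mono_ae
      (integrable_finsetSum _ fun i _ => ((hu2 i).const_mul _)).integrableOn hf.integrableOn (hle n)
  rw [hS N, ← Finset.sum_Ico_eq_sub _ hn]
  calc |∑ i ∈ Finset.Ico N n, lam i * (∫ y in B, u i y ∂μ) ^ 2|
      ≤ ∑ i ∈ Finset.Ico N n, |lam i * (∫ y in B, u i y ∂μ) ^ 2| :=
        Finset.abs_sum_le_sum_abs _ _
    _ ≤ ∑ i ∈ Finset.Ico N n, μ.real B * (|lam i| * ∫ y in B, u i y ^ 2 ∂μ) := by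
        refine Finset.sum_le_sum fun i _ => ?_
        rw [abs_mul, abs_of_nonneg (sq_nonneg (∫ y in B, u i y ∂μ)), mul_left_comm]
        exact mul_le_mul_of_nonneg_left (sq_setIntegral_le μ (hu i) B) (abs_nonneg _)
    _ = μ.real B * ((∑ i ∈ Finset.range n, |lam i| * ∫ y in B, u i y ^ 2 ∂μ)
          - ∑ i ∈ Finset.range N, |lam i| * ∫ y in B, u i y ^ 2 ∂μ) := by
        rw [← Finset.mul_sum, Finset.sum_Ico_eq_sub _ hn]
    _ ≤ _ := by gcongr

/-- `Σ |λᵢ| uᵢ²` is finite almost everywhere, because its integral is `Σ |λᵢ| < ∞`. -/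
lemma ae_summable_of_trace {X : Type*} [MeasurableSpace X] (μ : Measure X)
    (lam : ℕ → ℝ) (u : ℕ → X → ℝ) (hmeas : ∀ i, Measurable (u i))
    (hu2 : ∀ i, Integrable (fun y => u i y ^ 2) μ) (hnorm : ∀ i, ∫ y, u i y ^ 2 ∂μ = 1)
    (htrace : Summable fun i => |lam i|) :
    ∀ᵐ y ∂μ, Summable fun i => |lam i| * u i y ^ 2 := by
  have hm : ∀ i, Measurable fun y => ENNReal.ofReal (|lam i| * u i y ^ 2) := fun i => by
    have := hmeas i
    fun_prop
  have hfin : ∫⁻ y, ∑' i, ENNReal.ofReal (|lam i| * u i y ^ 2) ∂μ ≠ ⊤ := by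
    rw [lintegral_tsum fun i => (hm i).aemeasurable]
    have : ∀ i, ∫⁻ y, ENNReal.ofReal (|lam i| * u i y ^ 2) ∂μ = ENNReal.ofReal |lam i| := by
      intro i
      rw [← ofReal_integral_eq_lintegral_ofReal ((hu2 i).const_mul _)
        (Eventually.of_forall fun y => by positivity), integral_const_mul, hnorm, mul_one]
    simp only [this]
    exact htrace.tsum_ofReal_ne_top
  filter_upwards [ae_lt_top (Measurable.tsum hm) hfin] with y hy
  have := ENNReal.summable_toReal hy.ne
  refine this.congr fun i => ?_
  rw [ENNReal.toReal_ofReal (by positivity)]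

/-! ### Bounds and continuity for the MDS kernels -/

/-- The quadratic weight `1 + d(z, y)²`, in `L²(μ)` when the fourth moment is finite. Products
of two weights, shifted by constants, bound `k` and `k_T`. -/
def mdsWeight {X : Type*} [MetricSpace X] (z y : X) : ℝ := 1 + dist z y ^ 2

lemma mdsWeight_pos {X : Type*} [MetricSpace X] (z y : X) : 0 < mdsWeight z y := by
  unfold mdsWeight; positivity

lemma continuous_mdsWeight {X : Type*} [MetricSpace X] (z : X) : Continuous (mdsWeight z) := by
  unfold mdsWeight; fun_prop

lemma continuous_mdsK {X : Type*} [MetricSpace X] :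
    Continuous fun p : X × X => mdsK p.1 p.2 := by
  unfold mdsK; fun_prop

lemma abs_mdsK_le {X : Type*} [MetricSpace X] (z x y : X) :
    |mdsK x y| ≤ mdsWeight z x * mdsWeight z y := by
  have h := dist_triangle_left x y z
  have h0 : 0 ≤ dist x y := dist_nonneg
  unfold mdsK mdsWeight
  rw [abs_of_nonpos (by nlinarith)]
  nlinarith [sq_nonneg (dist z x - dist z y),
    mul_nonneg (sq_nonneg (dist z x)) (sq_nonneg (dist z y)),
    pow_le_pow_left₀ h0 h 2]

section Kernel

variable {X : Type*} [MetricSpace X] [MeasurableSpace X] (μ : Measure X) {z : X}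

lemma memLp_mdsWeight [BorelSpace X] [IsProbabilityMeasure μ]
    (hz : Integrable (fun y => dist z y ^ 4) μ) :
    MemLp (mdsWeight z) 2 μ := by
  have hms := (continuous_mdsWeight z).measurable
  refine (memLp_two_iff_integrable_sq hms.aestronglyMeasurable).2 ?_
  refine ((hz.const_mul 2).add (integrable_const 2)).mono' (hms.pow_const 2).aestronglyMeasurable
    (Eventually.of_forall fun y => ?_)
  rw [Real.norm_of_nonneg (sq_nonneg _)]
  unfold mdsWeight
  simp only [Pi.add_apply]
  nlinarith [sq_nonneg (1 - dist z y ^ 2)]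

lemma continuous_integral_mdsK [BorelSpace X]
    (hw : Integrable (mdsWeight z) μ) :
    Continuous fun x => ∫ y, mdsK x y ∂μ := by
  rw [continuous_iff_continuousAt]
  intro x₀
  -- Near `x₀` the weight at `x` is at most `mdsWeight z x₀ + 1`, giving a dominating function.
  refine continuousAt_of_dominated (bound := fun y => (mdsWeight z x₀ + 1) * mdsWeight z y)
    ?_ ?_ (hw.const_mul _) ?_
  · exact Eventually.of_forall fun x =>
      (continuous_mdsK.comp (Continuous.prodMk_right x)).aestronglyMeasurable
  · filter_upwards [(continuous_mdsWeight z).continuousAt.eventually_lt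
      (continuousAt_const (y := mdsWeight z x₀ + 1)) (lt_add_one _)] with x hx
    refine Eventually.of_forall fun y => (abs_mdsK_le z x y).trans ?_
    have := mdsWeight_pos z y
    gcongr
  · exact Eventually.of_forall fun y =>
      (continuous_mdsK.comp (Continuous.prodMk_left y)).continuousAt

lemma abs_integral_mdsK_le (hw : Integrable (mdsWeight z) μ) (x : X) :
    |∫ y, mdsK x y ∂μ| ≤ mdsWeight z x * ∫ y, mdsWeight z y ∂μ := by
  rw [← integral_const_mul]
  refine norm_integral_le_of_norm_le (f := fun y => mdsK x y) (hw.const_mul _) ?_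
  exact Eventually.of_forall fun y => abs_mdsK_le z x y

lemma mdsKT_eq (x y : X) : mdsKT μ x y =
    mdsK x y - (∫ y', mdsK x y' ∂μ) - (∫ x', mdsK y x' ∂μ) + ∫ x', ∫ y', mdsK x' y' ∂μ ∂μ := by
  simp only [mdsKT, mdsK, dist_comm]

lemma continuous_mdsKT [BorelSpace X]
    (hw : Integrable (mdsWeight z) μ) :
    Continuous fun p : X × X => mdsKT μ p.1 p.2 := by
  have h := continuous_integral_mdsK μ hw
  simp only [mdsKT_eq]
  exact ((continuous_mdsK.sub (h.comp continuous_fst)).sub (h.comp continuous_snd)).add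
    continuous_const

lemma abs_mdsKT_le (hw : Integrable (mdsWeight z) μ) (x y : X) :
    |mdsKT μ x y| ≤ (mdsWeight z x + ∫ t, mdsWeight z t ∂μ)
      * (mdsWeight z y + ∫ t, mdsWeight z t ∂μ) := by
  have h1 := abs_mdsK_le z x y
  have h2 := abs_integral_mdsK_le μ hw x
  have h3 := abs_integral_mdsK_le μ hw y
  have h4 : |∫ x', ∫ y', mdsK x' y' ∂μ ∂μ|
      ≤ (∫ t, mdsWeight z t ∂μ) * ∫ t, mdsWeight z t ∂μ := by
    rw [← integral_mul_const]
    refine norm_integral_le_of_norm_le (f := fun x' => ∫ y', mdsK x' y' ∂μ) (hw.mul_const _) ?_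
    exact Eventually.of_forall fun x => abs_integral_mdsK_le μ hw x
  rw [mdsKT_eq, abs_le]
  rw [abs_le] at h1 h2 h3 h4
  constructor <;> nlinarith

lemma memLp_mdsKT [SecondCountableTopology X] [BorelSpace X] [IsProbabilityMeasure μ]
    (hw : MemLp (mdsWeight z) 2 μ) :
    MemLp (fun p : X × X => mdsKT μ p.1 p.2) 2 (μ.prod μ) := by
  have hw1 := hw.integrable one_le_two
  have hsq : Integrable (fun y => (mdsWeight z y + ∫ t, mdsWeight z t ∂μ) ^ 2) μ :=
    (hw.add (memLp_const _)).integrable_sq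
  have hms := (continuous_mdsKT μ hw1).measurable
  refine (memLp_two_iff_integrable_sq hms.aestronglyMeasurable).2 ?_
  refine (hsq.mul_prod hsq).mono' (hms.pow_const 2).aestronglyMeasurable
    (Eventually.of_forall fun p => ?_)
  rw [Real.norm_of_nonneg (sq_nonneg _), ← mul_pow, ← sq_abs (mdsKT μ p.1 p.2)]
  exact pow_le_pow_left₀ (abs_nonneg _) (abs_mdsKT_le μ hw1 p.1 p.2) 2

/-- Eigenfunctions with nonzero eigenvalue are multiples of such integrals, hence continuous. -/
lemma continuous_integral_mdsKT_mul [BorelSpace X] [IsProbabilityMeasure μ]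
    (hw : MemLp (mdsWeight z) 2 μ) {v : X → ℝ}
    (hv : MemLp v 2 μ) : Continuous fun x => ∫ y, mdsKT μ x y * v y ∂μ := by
  have hw1 := hw.integrable one_le_two
  have hK := continuous_mdsKT μ hw1
  rw [continuous_iff_continuousAt]
  intro x₀
  set m := ∫ t, mdsWeight z t ∂μ with hm
  have hm0 : 0 ≤ m := integral_nonneg fun y => (mdsWeight_pos z y).le
  have hb : Integrable (fun y => (mdsWeight z y + m) * |v y|) μ :=
    (hw.add (memLp_const m)).integrable_mul hv.abs
  refine continuousAt_of_dominated
    (bound := fun y => (mdsWeight z x₀ + 1 + m) * ((mdsWeight z y + m) * |v y|))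
    ?_ ?_ (hb.const_mul _) ?_
  · exact Eventually.of_forall fun x =>
      (hK.comp (Continuous.prodMk_right x)).aestronglyMeasurable.mul hv.1
  · filter_upwards [(continuous_mdsWeight z).continuousAt.eventually_lt
      (continuousAt_const (y := mdsWeight z x₀ + 1)) (lt_add_one _)] with x hx
    refine Eventually.of_forall fun y => ?_
    rw [norm_mul, ← mul_assoc]
    refine mul_le_mul_of_nonneg_right ((abs_mdsKT_le μ hw1 x y).trans ?_) (abs_nonneg _)
    have := mdsWeight_pos z y
    rw [← hm]
    gcongr
  · exact Eventually.of_forall fun y =>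
      ((hK.comp (Continuous.prodMk_left y)).mul continuous_const).continuousAt

end Kernel

/-- Lemma 4.1: if `T` is trace class, `(λᵢ, uᵢ)` is an orthonormal eigenbasis of `T`
(the expansion `Σ λᵢ uᵢ ⊗ uᵢ = k_T` holding in `L²(μ ⊗ μ)`), `f = Σ |λᵢ| uᵢ²`, and
`x` is a Lebesgue point of `f`, then `Σ λᵢ uᵢ(x)²` converges absolutely to `k_T(x,x)`. -/
theorem eigen_expansion_at_lebesgue_point
    {X : Type*} [MetricSpace X] [CompleteSpace X] [SecondCountableTopology X]
    [MeasurableSpace X] [BorelSpace X]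
    (μ : Measure X) [IsProbabilityMeasure μ]
    (hmom : ∃ z : X, Integrable (fun y => dist z y ^ 4) μ)
    (lam : ℕ → ℝ) (u : ℕ → X → ℝ)
    (hmeas : ∀ i, Measurable (u i))
    (heig : ∀ i, lam i ≠ 0 → ∀ x, lam i * u i x = ∫ y, mdsKT μ x y * u i y ∂μ)
    (horth : ∀ i j, (∫ x, u i x * u j x ∂μ) = if i = j then 1 else 0)
    (htrace : Summable fun i => |lam i|)
    (hbasis : Tendsto
      (fun n => ∫ p, (mdsKT μ p.1 p.2 - ∑ i ∈ Finset.range n, lam i * u i p.1 * u i p.2) ^ 2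
        ∂(μ.prod μ)) atTop (𝓝 0))
    (f : X → ℝ) (hf : f = fun x => ∑' i, |lam i| * (u i x) ^ 2)
    (hfint : Integrable f μ)
    (x : X) (hx : IsLebPoint μ f x) :
    (Summable fun i => |lam i| * (u i x) ^ 2) ∧
    (∑' i, lam i * (u i x) ^ 2) = mdsKT μ x x := by
  -- Square-integrability of `u i` comes from `∫ uᵢ² = 1 ≠ 0`, as a Bochner integral.
  have hnorm : ∀ i, ∫ y, u i y ^ 2 ∂μ = 1 := fun i => by simpa [sq] using horth i i
  have hu2 : ∀ i, Integrable (fun y => u i y ^ 2) μ := fun i =>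
    Integrable.of_integral_ne_zero (by rw [hnorm]; exact one_ne_zero)
  have hu : ∀ i, MemLp (u i) 2 μ := fun i =>
    (memLp_two_iff_integrable_sq (hmeas i).aestronglyMeasurable).2 (hu2 i)
  obtain ⟨z, hz⟩ := hmom
  have hw := memLp_mdsWeight μ hz
  have hw1 := hw.integrable one_le_two
  have hcont : ∀ i, lam i ≠ 0 → Continuous (u i) := by
    intro i hi
    have : u i = fun x => (lam i)⁻¹ * ∫ y, mdsKT μ x y * u i y ∂μ := by
      funext x
      rw [← heig i hi x, inv_mul_cancel_left₀ hi]
    rw [this]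
    exact continuous_const.mul (continuous_integral_mdsKT_mul μ hw (hu i))
  have hle : ∀ N, ∀ᵐ y ∂μ, ∑ i ∈ Finset.range N, |lam i| * u i y ^ 2 ≤ f y := by
    intro N
    filter_upwards [ae_summable_of_trace μ lam u hmeas hu2 hnorm htrace] with y hy
    rw [hf]
    exact hy.sum_le_tsum _ fun i _ => by positivity
  obtain ⟨hpos, hleb⟩ := hx
  have hS : ∀ N, Tendsto (fun r : ℝ => (μ.real (ball x r))⁻¹ *
      ∫ y in ball x r, (∑ i ∈ Finset.range N, |lam i| * u i y ^ 2) ∂μ)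
      (𝓝[>] 0) (𝓝 (∑ i ∈ Finset.range N, |lam i| * u i x ^ 2)) := by
    intro N
    refine tendsto_ball_average μ (integrable_finsetSum _ fun i _ => (hu2 i).const_mul _)
      (Continuous.continuousAt (continuous_finsetSum _ fun i _ => ?_)) hpos
    by_cases hi : lam i = 0
    · simpa [hi] using continuous_const (y := (0 : ℝ))
    · exact continuous_const.mul ((hcont i hi).pow 2)
  have hA : ∀ N, Tendsto (fun r : ℝ => ∑ i ∈ Finset.range N,
      lam i * ((μ.real (ball x r))⁻¹ * ∫ y in ball x r, u i y ∂μ) ^ 2)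
      (𝓝[>] 0) (𝓝 (∑ i ∈ Finset.range N, lam i * u i x ^ 2)) := by
    intro N
    refine tendsto_finsetSum _ fun i _ => ?_
    by_cases hi : lam i = 0
    · simp [hi]
    · exact ((tendsto_ball_average μ ((hu i).integrable one_le_two) (hcont i hi).continuousAt
        hpos).pow 2).const_mul _
  have hKT := memLp_mdsKT μ hw
  -- In the sup metric on `X × X`, the ball around `(x, x)` is `B × B`.
  have hK : Tendsto (fun r : ℝ => ((μ.real (ball x r)) ^ 2)⁻¹ *
      ∫ p in ball x r ×ˢ ball x r, mdsKT μ p.1 p.2 ∂(μ.prod μ))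
      (𝓝[>] 0) (𝓝 (mdsKT μ x x)) := by
    have := tendsto_ball_average (μ.prod μ) (hKT.integrable one_le_two) (a := (x, x))
      (continuous_mdsKT μ hw1).continuousAt (fun r hr => by
        rw [← ball_prod_same, Measure.prod_prod]
        exact ENNReal.mul_pos (hpos r hr).ne' (hpos r hr).ne')
    simpa only [← ball_prod_same, measureReal_prod_prod, ← sq] using this
  -- The averaged box estimate, in the limit `r → 0`.
  have hmain : ∀ N, |mdsKT μ x x - ∑ i ∈ Finset.range N, lam i * u i x ^ 2|
      ≤ f x - ∑ i ∈ Finset.range N, |lam i| * u i x ^ 2 := by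
    intro N
    refine le_of_tendsto_of_tendsto (hK.sub (hA N)).abs (hleb.sub (hS N)) ?_
    filter_upwards [self_mem_nhdsWithin] with r hr
    have hm : 0 < μ.real (ball x r) :=
      ENNReal.toReal_pos (hpos r hr).ne' (measure_ne_top _ _)
    have hb := box_estimate μ _ hKT lam u hu hbasis f hfint hle (ball x r) N
    change _ ≤ (μ.real (ball x r))⁻¹ * _ - _
    have e : (μ.real (ball x r) ^ 2)⁻¹ *
        (∫ p in ball x r ×ˢ ball x r, mdsKT μ p.1 p.2 ∂(μ.prod μ)) -
        ∑ i ∈ Finset.range N, lam i * ((μ.real (ball x r))⁻¹ * ∫ y in ball x r, u i y ∂μ) ^ 2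
        = (μ.real (ball x r) ^ 2)⁻¹ *
          ((∫ p in ball x r ×ˢ ball x r, mdsKT μ p.1 p.2 ∂(μ.prod μ)) -
            ∑ i ∈ Finset.range N, lam i * (∫ y in ball x r, u i y ∂μ) ^ 2) := by
      rw [mul_sub, Finset.mul_sum]
      congr 1
      refine Finset.sum_congr rfl fun i _ => ?_
      rw [mul_pow, inv_pow]; ring
    rw [e, abs_mul, abs_of_pos (by positivity), ← mul_sub]
    refine (mul_le_mul_of_nonneg_left hb (by positivity)).trans_eq ?_
    field_simp
  have hsum : Summable fun i => |lam i| * u i x ^ 2 :=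
    summable_of_sum_range_le (c := f x) (fun i => by positivity) fun N => by
      linarith [(abs_nonneg _).trans (hmain N)]
  refine ⟨hsum, ?_⟩
  have hsum' : Summable fun i => lam i * u i x ^ 2 := by
    refine Summable.of_abs (hsum.congr fun i => ?_)
    rw [abs_mul, abs_of_nonneg (sq_nonneg (u i x))]
  have hfx : f x = ∑' i, |lam i| * u i x ^ 2 := by rw [hf]
  have hR : Tendsto (fun N => f x - ∑ i ∈ Finset.range N, |lam i| * u i x ^ 2) atTop (𝓝 0) := by
    have := hsum.hasSum.tendsto_sum_nat.const_sub (f x)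
    rwa [← hfx, sub_self] at this
  have hL := (hsum'.hasSum.tendsto_sum_nat.const_sub (mdsKT μ x x)).abs
  have h0 := le_of_tendsto_of_tendsto' hL hR hmain
  exact (sub_eq_zero.1 (abs_nonpos_iff.1 h0)).symm
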